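/- arXiv:1305.3831 — 3 statements merged into one kernel-verified Lean document; each statement's English description precedes it below -/
import Mathlib

section
/- Let S be a numerical semigroup and x an irreducible element of S, and write S^x = S \ {x}. Then for every y ∈ ℕ with y ≠ 0: d_{S^x}(y) = d_S(y) − 1 if y ≥ x and d_S(y − x) > 0, and d_{S^x}(y) = d_S(y) otherwise. -/
/-!
A decomposition `y = a + b` with `a ≤ b` is lost on removing `x` from `S` exactly when `x` is one of
its two parts. The only candidate is `x + (y - x)`, recorded in `decompSet S y` by its smaller part
`min x (y - x)`; it is a decomposition precisely when `x ≤ y` and `y - x ∈ S`. For a submonoid `S`,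
membership of `y - x` is the same as `0 < d S (y - x)`, because of the decomposition `0 + (y - x)`.
-/

/-- A numerical semigroup: a set of naturals containing 0, closed under
addition, with finite complement. -/
def IsNumericalSemigroup (S : Set ℕ) : Prop :=
  0 ∈ S ∧ (∀ a ∈ S, ∀ b ∈ S, a + b ∈ S) ∧ Sᶜ.Finite

/-- The genus: cardinality of the complement. -/
noncomputable def genus (S : Set ℕ) : ℕ := Sᶜ.ncard

/-- The multiplicity: least nonzero element. -/
noncomputable def mult (S : Set ℕ) : ℕ := sInf {n | n ∈ S ∧ n ≠ 0}

open Classical in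
/-- The conductor: 0 for ℕ itself, otherwise 1 + max of the complement. -/
noncomputable def nsgConductor (S : Set ℕ) : ℕ := if S = Set.univ then 0 else sSup Sᶜ + 1

/-- Irreducible elements: nonzero elements not expressible as a sum of two
nonzero elements. -/
def Irr (S : Set ℕ) : Set ℕ :=
  {x | x ∈ S ∧ x ≠ 0 ∧ ¬ ∃ a ∈ S, ∃ b ∈ S, a ≠ 0 ∧ b ≠ 0 ∧ x = a + b}

/-- The decomposition set D_S(x). -/
def decompSet (S : Set ℕ) (x : ℕ) : Set ℕ :=
  {y | y ∈ S ∧ x - y ∈ S ∧ y ≤ x ∧ 2 * y ≤ x}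

/-- The decomposition number d_S(x). -/
noncomputable def d (S : Set ℕ) (x : ℕ) : ℕ := (decompSet S x).ncard

section

variable {S : Set ℕ} {x y : ℕ}

theorem decompSet_finite (S : Set ℕ) (y : ℕ) : (decompSet S y).Finite :=
  (Set.finite_Iic y).subset fun _ ha => ha.2.2.1

theorem min_mem_decompSet_iff (hxy : x ≤ y) :
    min x (y - x) ∈ decompSet S y ↔ x ∈ S ∧ y - x ∈ S := by
  have hle : min x (y - x) ≤ y ∧ 2 * min x (y - x) ≤ y := by omega
  simp only [decompSet, Set.mem_ofPred_eq, hle, and_true]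
  rcases le_total x (y - x) with h | h
  · rw [min_eq_left h]
  · rw [min_eq_right h, Nat.sub_sub_self hxy, and_comm]

theorem decompSet_sdiff_singleton_of_lt (hyx : y < x) :
    decompSet (S \ {x}) y = decompSet S y := by
  ext a
  have ha : a ≤ y → a ≠ x := by omega
  have hb : y - a ≠ x := by omega
  simp only [decompSet, Set.mem_ofPred_eq, Set.mem_sdiff, Set.mem_singleton_iff]
  tauto

theorem decompSet_sdiff_singleton_of_le (hxy : x ≤ y) :
    decompSet (S \ {x}) y = decompSet S y \ {min x (y - x)} := by
  ext a
  have part_eq_iff : 2 * a ≤ y → (a = min x (y - x) ↔ a = x ∨ y - a = x) := by omega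
  simp only [decompSet, Set.mem_ofPred_eq, Set.mem_sdiff, Set.mem_singleton_iff]
  tauto

theorem d_sdiff_singleton_add_one (hx : x ∈ S) (hxy : x ≤ y) (hyx : y - x ∈ S) :
    d (S \ {x}) y + 1 = d S y := by
  rw [d, d, decompSet_sdiff_singleton_of_le hxy]
  exact Set.ncard_sdiff_singleton_add_one ((min_mem_decompSet_iff hxy).2 ⟨hx, hyx⟩)
    (decompSet_finite S y)

theorem d_sdiff_singleton_of_sub_notMem (h : x ≤ y → y - x ∉ S) : d (S \ {x}) y = d S y := by
  rw [d, d]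
  rcases lt_or_ge y x with hyx | hxy
  · rw [decompSet_sdiff_singleton_of_lt hyx]
  · rw [decompSet_sdiff_singleton_of_le hxy, Set.sdiff_singleton_eq_self]
    exact fun hmin => h hxy ((min_mem_decompSet_iff hxy).1 hmin).2

end

theorem d_pos_iff_mem (S : AddSubmonoid ℕ) (y : ℕ) : 0 < d S y ↔ y ∈ S := by
  rw [d, Set.ncard_pos (decompSet_finite S y)]
  constructor
  · rintro ⟨a, ha, hb, hay, -⟩
    simpa only [Nat.add_sub_cancel' hay] using S.add_mem ha hb
  · exact fun hy => ⟨0, S.zero_mem, hy, y.zero_le, y.zero_le⟩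

theorem stmt_15_general (S : AddSubmonoid ℕ) {x : ℕ} (hx : x ∈ S) (y : ℕ) :
    (x ≤ y ∧ 0 < d S (y - x) → d (S \ {x}) y + 1 = d S y) ∧
    (¬ (x ≤ y ∧ 0 < d S (y - x)) → d (S \ {x}) y = d S y) := by
  rw [d_pos_iff_mem]
  exact ⟨fun ⟨hxy, hyx⟩ => d_sdiff_singleton_add_one hx hxy hyx,
    fun h => d_sdiff_singleton_of_sub_notMem (not_and.1 h)⟩

/-- Update rule for the decomposition numbers when removing an irreducible
element x from S. -/
theorem stmt_15 (S : Set ℕ) (hS : IsNumericalSemigroup S) (x : ℕ)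
    (hx : x ∈ Irr S) (y : ℕ) (hy : y ≠ 0) :
    (x ≤ y ∧ 0 < d S (y - x) → d (S \ {x}) y = d S y - 1) ∧
    (¬ (x ≤ y ∧ 0 < d S (y - x)) → d (S \ {x}) y = d S y) := by
  let M : AddSubmonoid ℕ := ⟨⟨S, fun ha hb => hS.2.1 _ ha _ hb⟩, hS.1⟩
  exact (stmt_15_general M hx.1 y).imp_left fun h hxy => Nat.eq_sub_of_add_eq (h hxy)
end

section
/- Let G ∈ ℕ and let S and T be numerical semigroups with g(S) ≤ G and g(T) ≤ G. If d_S(i) = d_T(i) for every i ∈ [0, 3G], then S = T. In other words, a numerical semigroup of genus at most G is entirely determined by the tuple (d_S(0), …, d_S(3G)). -/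
/-!
Decomposition numbers detect membership: `d S n` vanishes exactly when `n` is not a sum of two
elements of `S`, and `S + S = S` for a numerical semigroup. If `n` is a gap, each pair `(a, n - a)`
with `a ≤ n` contains a gap, so the gaps and their reflections in `n` cover `[0, n]` and
`n + 1 ≤ 2 * genus S`. Agreement of the decomposition numbers below `2 * G` therefore already
determines all the gaps.
-/

section Pointwise

open scoped Pointwise

theorem d_ne_zero_iff_mem_add_self {S : Set ℕ} {n : ℕ} : d S n ≠ 0 ↔ n ∈ S + S := by
  have hfin : (decompSet S n).Finite := (Set.finite_Iic n).subset fun y hy => hy.2.2.1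
  rw [d, ← Nat.pos_iff_ne_zero, Set.ncard_pos hfin, Set.mem_add]
  constructor
  · rintro ⟨y, hy, hny, hle, -⟩
    exact ⟨y, hy, n - y, hny, Nat.add_sub_cancel' hle⟩
  · rintro ⟨a, ha, b, hb, rfl⟩
    rcases le_total a b with hab | hba
    · exact ⟨a, ha, by rwa [Nat.add_sub_cancel_left], by lia, by lia⟩
    · exact ⟨b, hb, by rwa [Nat.add_sub_cancel_right], by lia, by lia⟩

theorem mem_add_self_of_two_mul_genus_le {S : Set ℕ} (hfin : Sᶜ.Finite) {n : ℕ}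
    (hn : 2 * genus S ≤ n) : n ∈ S + S := by
  by_contra hnS
  have hcover : Set.Iic n ⊆ Sᶜ ∪ (n - ·) '' Sᶜ := by
    intro a (ha : a ≤ n)
    by_cases haS : a ∈ S
    · have hgap : n - a ∈ Sᶜ := fun hna =>
        hnS (Set.mem_add.2 ⟨a, haS, n - a, hna, Nat.add_sub_cancel' ha⟩)
      exact Or.inr ⟨n - a, hgap, Nat.sub_sub_self ha⟩
    · exact Or.inl haS
  refine hn.not_gt ?_
  calc
    n < (Set.Iic n).ncard := by simp [Set.ncard_eq_toFinset_card']
    _ ≤ (Sᶜ ∪ (n - ·) '' Sᶜ).ncard := Set.ncard_le_ncard hcover (hfin.union (hfin.image _))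
    _ ≤ Sᶜ.ncard + ((n - ·) '' Sᶜ).ncard := Set.ncard_union_le _ _
    _ ≤ Sᶜ.ncard + Sᶜ.ncard := Nat.add_le_add_left (Set.ncard_image_le hfin) _
    _ = 2 * genus S := (two_mul _).symm

namespace IsNumericalSemigroup

variable {S : Set ℕ}

theorem add_self (hS : IsNumericalSemigroup S) : S + S = S :=
  (Set.add_subset_iff.2 hS.2.1).antisymm (Set.subset_add_left S hS.1)

theorem d_ne_zero_iff_mem (hS : IsNumericalSemigroup S) {n : ℕ} : d S n ≠ 0 ↔ n ∈ S := by
  rw [d_ne_zero_iff_mem_add_self, hS.add_self]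

theorem mem_of_two_mul_genus_le (hS : IsNumericalSemigroup S) {n : ℕ} (hn : 2 * genus S ≤ n) :
    n ∈ S :=
  hS.add_self ▸ mem_add_self_of_two_mul_genus_le hS.2.2 hn

end IsNumericalSemigroup

end Pointwise

theorem stmt_18_general (G : ℕ) (S T : Set ℕ) (hS : IsNumericalSemigroup S)
    (hT : IsNumericalSemigroup T) (hgS : genus S ≤ G) (hgT : genus T ≤ G)
    (h : ∀ i < 2 * G, d S i = d T i) : S = T := by
  ext n
  rcases lt_or_ge n (2 * G) with hn | hn
  · rw [← hS.d_ne_zero_iff_mem, ← hT.d_ne_zero_iff_mem, h n hn]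
  · exact iff_of_true (hS.mem_of_two_mul_genus_le (by lia)) (hT.mem_of_two_mul_genus_le (by lia))

/-- A numerical semigroup of genus at most G is determined by the tuple
(d_S(0), ..., d_S(3G)). -/
theorem stmt_18 (G : ℕ) (S T : Set ℕ) (hS : IsNumericalSemigroup S)
    (hT : IsNumericalSemigroup T) (hgS : genus S ≤ G) (hgT : genus T ≤ G)
    (h : ∀ i ≤ 3 * G, d S i = d T i) : S = T :=
  stmt_18_general G S T hS hT hgS hgT fun i hi => h i (by lia)
end

section
/- Let S be a numerical semigroup and x an irreducible element of S with x ≥ c(S), and write S^x = S \ {x}. Then c(S^x) = x + 1, g(S^x) = g(S) + 1, and m(S^x) = m(S) if x > m(S) while m(S^x) = m(S) + 1 if x = m(S). Moreover, the number of such x, i.e. the cardinality of Irr(S) ∩ [c(S), ∞), is at most m(S). -/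
/-!
Every gap of `S` lies below `c(S) ≤ x`, so removing `x` adds a new largest gap: this gives the
conductor and the genus. When `x = m(S)`, the next integer `m(S) + 1` is past the conductor, hence
becomes the least nonzero element.

An irreducible `y > m(S)` has `y - m(S) ∉ S`, that is, `y` belongs to the Apéry set of `m(S)`;
hence `y - m(S) < c(S)`, which confines the irreducibles past the conductor to an interval of
length `m(S)`.
-/

section

variable {S : Set ℕ} {x : ℕ}

lemma nsgConductor_le_iff (hS : Sᶜ.Finite) {k : ℕ} : nsgConductor S ≤ k ↔ Set.Ici k ⊆ S := by
  by_cases hne : S = Set.univ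
  · simp [nsgConductor, hne]
  rw [nsgConductor, if_neg hne, Nat.succ_le_iff,
    hS.csSup_lt_iff (Set.nonempty_compl.mpr hne)]
  exact forall_congr' fun y => by rw [← not_le]; exact not_imp_not

lemma mem_of_nsgConductor_le (hS : Sᶜ.Finite) (hx : nsgConductor S ≤ x) : x ∈ S :=
  (nsgConductor_le_iff hS).mp hx Set.self_mem_Ici

lemma nsgConductor_sdiff_singleton (hS : Sᶜ.Finite) (hx : nsgConductor S ≤ x) :
    nsgConductor (S \ {x}) = x + 1 := by
  have hSx : (S \ {x})ᶜ.Finite := by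
    rw [Set.compl_sdiff]
    exact (Set.finite_singleton x).union hS
  refine eq_of_forall_ge_iff fun k => ?_
  rw [nsgConductor_le_iff hSx, Set.subset_sdiff, ← nsgConductor_le_iff hS,
    Set.disjoint_singleton_right, Set.mem_Ici]
  omega

lemma genus_sdiff_singleton (hS : Sᶜ.Finite) (hx : x ∈ S) :
    genus (S \ {x}) = genus S + 1 := by
  rw [genus, genus, Set.compl_sdiff, Set.singleton_union,
    Set.ncard_insert_of_notMem (Set.notMem_compl_iff.mpr hx) hS]

lemma isLeast_mult (hS : {n | n ∈ S ∧ n ≠ 0}.Nonempty) :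
    IsLeast {n | n ∈ S ∧ n ≠ 0} (mult S) :=
  isLeast_csInf hS

lemma mult_sdiff_singleton_of_ne (hS : {n | n ∈ S ∧ n ≠ 0}.Nonempty) (hx : x ≠ mult S) :
    mult (S \ {x}) = mult S := by
  obtain ⟨⟨hmem, hne⟩, hmin⟩ := isLeast_mult hS
  exact IsLeast.csInf_eq ⟨⟨⟨hmem, hx.symm⟩, hne⟩, fun y hy => hmin ⟨hy.1.1, hy.2⟩⟩

lemma mult_sdiff_singleton_mult (hS : mult S + 1 ∈ S) :
    mult (S \ {mult S}) = mult S + 1 := by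
  have hmin := (isLeast_mult ⟨_, hS, Nat.succ_ne_zero _⟩).2
  refine IsLeast.csInf_eq ⟨⟨⟨hS, Nat.succ_ne_self _⟩, Nat.succ_ne_zero _⟩, ?_⟩
  rintro y ⟨⟨hyS, hy⟩, hy0⟩
  exact Nat.succ_le_of_lt (lt_of_le_of_ne (hmin ⟨hyS, hy0⟩) (Ne.symm hy))

lemma sub_mult_notMem_of_mem_irr (hx : x ∈ Irr S) (hlt : mult S < x) : x - mult S ∉ S := by
  obtain ⟨hxS, hx0, hirr⟩ := hx
  obtain ⟨hmS, hm0⟩ := (isLeast_mult ⟨x, hxS, hx0⟩).1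
  exact fun hsub => hirr ⟨mult S, hmS, x - mult S, hsub, hm0, by omega, by omega⟩

-- The `max` is needed for `S = ℕ`, where `c = 0` and the irreducible element `1` equals `c + m`.
lemma lt_max_nsgConductor_one_add_mult_of_mem_irr (hS : Sᶜ.Finite) (hx : x ∈ Irr S) :
    x < max (nsgConductor S) 1 + mult S := by
  by_contra! hle
  exact sub_mult_notMem_of_mem_irr hx (by omega) (mem_of_nsgConductor_le hS (by omega))

lemma ncard_irr_inter_nsgConductor_le (hS : Sᶜ.Finite) :
    (Irr S ∩ {y | nsgConductor S ≤ y}).ncard ≤ mult S := by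
  set c := max (nsgConductor S) 1
  have hsub : Irr S ∩ {y | nsgConductor S ≤ y} ⊆ Set.Ico c (c + mult S) := fun y ⟨hy, hcy⟩ =>
    ⟨max_le hcy (Nat.one_le_iff_ne_zero.mpr hy.2.1),
      lt_max_nsgConductor_one_add_mult_of_mem_irr hS hy⟩
  calc (Irr S ∩ {y | nsgConductor S ≤ y}).ncard
      ≤ (Set.Ico c (c + mult S)).ncard := Set.ncard_le_ncard hsub (Set.finite_Ico _ _)
    _ = mult S := by rw [Set.ncard_Ico_nat, Nat.add_sub_cancel_left]

end

theorem stmt_19_general (S : Set ℕ) (hS : Sᶜ.Finite) (x : ℕ) (hxc : nsgConductor S ≤ x) :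
    nsgConductor (S \ {x}) = x + 1 ∧
    genus (S \ {x}) = genus S + 1 ∧
    (x > mult S → mult (S \ {x}) = mult S) ∧
    (x = mult S → mult (S \ {x}) = mult S + 1) ∧
    (Irr S ∩ {y | nsgConductor S ≤ y}).ncard ≤ mult S := by
  have hsucc : x + 1 ∈ S := mem_of_nsgConductor_le hS (Nat.le_succ_of_le hxc)
  refine ⟨nsgConductor_sdiff_singleton hS hxc,
    genus_sdiff_singleton hS (mem_of_nsgConductor_le hS hxc),
    fun hgt => mult_sdiff_singleton_of_ne ⟨x + 1, hsucc, Nat.succ_ne_zero x⟩ hgt.ne',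
    fun heq => ?_, ncard_irr_inter_nsgConductor_le hS⟩
  subst heq
  exact mult_sdiff_singleton_mult hsucc

/-- For an irreducible x ≥ c(S): the nsgConductor, genus and multiplicity of
S \ {x}, and the bound on the number of such x. -/
theorem stmt_19 (S : Set ℕ) (hS : IsNumericalSemigroup S) (x : ℕ)
    (hx : x ∈ Irr S) (hxc : nsgConductor S ≤ x) :
    nsgConductor (S \ {x}) = x + 1 ∧
    genus (S \ {x}) = genus S + 1 ∧
    (x > mult S → mult (S \ {x}) = mult S) ∧
    (x = mult S → mult (S \ {x}) = mult S + 1) ∧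
    (Irr S ∩ {y | nsgConductor S ≤ y}).ncard ≤ mult S :=
  stmt_19_general S hS.2.2 x hxc
end
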